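/- Let δ₁(t) = log((sqrt(1-t^2)+1)/t) - sqrt(1-t^2) for t ∈ (0,1). Then δ₁ is strictly decreasing on (0,1), δ₁(t) → ∞ as t → 0⁺, δ₁(1) = 0, and δ₁(t) ~ (2√2/3)(1-t)^{3/2} as t → 1⁻, i.e., lim_{t→1⁻} δ₁(t)/(1-t)^{3/2} = 2√2/3. -/

import Mathlib

open Filter Set

/-!
Put `s = √(1 - t²)`. Since `((1 + s) / t)² = (1 + s) / (1 - s)`, the strip width is
`δ₁(t) = artanh s - s`. As `t` increases from `0` to `1`, `s` decreases from `1` to `0`, while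
`artanh x - x` is strictly increasing, blows up at `1` and equals `x³ / 3 + O(x⁵)` at `0`. The
exponent `3 / 2` thus comes from cubing a square root, and the constant is `1 / 3` times the limit
`√2 ^ 3` of `s³ / (1 - t)^(3/2) = √(1 + t) ^ 3`.
-/

open Real Topology

theorem hasDerivAt_artanh_sub_self {x : ℝ} (hx : x ∈ Ioo (-1) 1) :
    HasDerivAt (fun y ↦ artanh y - y) (x ^ 2 / (1 - x ^ 2)) x := by
  have h := hasDerivAt_half_log_one_add_div_one_sub_sub_sum_range 1 hx.1 hx.2
  simp only [Finset.range_one, Finset.sum_singleton, Nat.cast_zero, mul_zero, zero_add, pow_one,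
    div_one] at h
  refine h.congr_of_eventuallyEq ?_
  filter_upwards [Ioo_mem_nhds hx.1 hx.2] with y hy
  rw [artanh_eq_half_log (Ioo_subset_Icc_self hy)]

-- The derivative vanishes at `0`, so the two sides of `0` are treated separately.
theorem strictMonoOn_artanh_sub_self : StrictMonoOn (fun x ↦ artanh x - x) (Ioo (-1) 1) := by
  have of_convex {D : Set ℝ} (hD : Convex ℝ D) (hsub : D ⊆ Ioo (-1) 1) (h0 : 0 ∉ interior D) :
      StrictMonoOn (fun x ↦ artanh x - x) D := by
    refine strictMonoOn_of_deriv_pos hD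
      (fun x hx ↦ (hasDerivAt_artanh_sub_self (hsub hx)).continuousAt.continuousWithinAt)
      fun x hx ↦ ?_
    have hx1 : x ∈ Ioo (-1) 1 := hsub (interior_subset hx)
    have hx0 : x ≠ 0 := fun h ↦ h0 (h ▸ hx)
    have hden : 0 < 1 - x ^ 2 := sub_pos.2 ((sq_lt_one_iff_abs_lt_one x).2 (abs_lt.2 hx1))
    rw [(hasDerivAt_artanh_sub_self hx1).deriv]
    positivity
  rw [← Ioc_union_Ico_eq_Ioo (show (-1 : ℝ) < 0 by simp) one_pos]
  refine (of_convex (convex_Ioc _ _) ?_ ?_).union (of_convex (convex_Ico _ _) ?_ ?_)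
    (isGreatest_Ioc (by simp)) (isLeast_Ico one_pos)
  · exact Ioc_subset_Ioo_right one_pos
  · simp
  · exact Ico_subset_Ioo_left (by simp)
  · simp

theorem tendsto_artanh_nhdsLT_one : Tendsto artanh (𝓝[<] 1) atTop := by
  refine tendsto_atTop.2 fun b ↦ ?_
  filter_upwards [Ioo_mem_nhdsLT (tanh_lt_one b)] with x hx
  calc b = artanh (tanh b) := (artanh_tanh b).symm
    _ ≤ artanh x := artanh_le_artanh (neg_one_lt_tanh b) hx.2 hx.1.le

theorem tendsto_artanh_sub_self_nhdsLT_one :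
    Tendsto (fun x ↦ artanh x - x) (𝓝[<] 1) atTop := by
  simpa only [sub_eq_add_neg, id] using
    tendsto_artanh_nhdsLT_one.atTop_add (tendsto_id.mono_left nhdsWithin_le_nhds).neg

theorem abs_artanh_sub_self_div_cube_sub_le {x : ℝ} (hx : x ≠ 0) (hx1 : |x| < 1) :
    |(artanh x - x) / x ^ 3 - 1 / 3| ≤ x ^ 2 / (1 - x ^ 2) := by
  have htaylor : |artanh x - (x + x ^ 3 / 3)| ≤ |x| ^ 5 / (1 - x ^ 2) := by
    have h := sum_range_sub_log_div_le hx1 2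
    rw [← artanh_eq_half_log (abs_le.1 hx1.le)] at h
    simpa [Finset.sum_range_succ, two_add_one_eq_three] using h
  calc |(artanh x - x) / x ^ 3 - 1 / 3|
      = |artanh x - (x + x ^ 3 / 3)| / |x| ^ 3 := by
        rw [← abs_pow, ← abs_div]; congr 1; field
    _ ≤ |x| ^ 5 / (1 - x ^ 2) / |x| ^ 3 := by gcongr
    _ = x ^ 2 / (1 - x ^ 2) := by rw [← sq_abs x]; field

theorem tendsto_artanh_sub_self_div_cube :
    Tendsto (fun x ↦ (artanh x - x) / x ^ 3) (𝓝[≠] 0) (𝓝 (1 / 3)) := by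
  have hbound : Tendsto (fun x : ℝ ↦ x ^ 2 / (1 - x ^ 2)) (𝓝[≠] 0) (𝓝 0) := by
    have hcont : ContinuousAt (fun x : ℝ ↦ x ^ 2 / (1 - x ^ 2)) 0 :=
      ContinuousAt.div (by fun_prop) (by fun_prop) (by simp)
    simpa using hcont.tendsto.mono_left nhdsWithin_le_nhds
  refine tendsto_iff_norm_sub_tendsto_zero.2 (squeeze_zero' (by simp) ?_ hbound)
  have hnear : ∀ᶠ x : ℝ in 𝓝[≠] 0, |x| < 1 :=
    nhdsWithin_le_nhds (continuous_abs.continuousAt.eventually_lt_const (by simp))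
  filter_upwards [self_mem_nhdsWithin, hnear] with x hx hx1
  exact abs_artanh_sub_self_div_cube_sub_le hx hx1

theorem strictAntiOn_sqrt_one_sub_sq : StrictAntiOn (fun t : ℝ ↦ √(1 - t ^ 2)) (Icc 0 1) := by
  intro a ha b hb hab
  have hb1 : b ^ 2 ≤ 1 := pow_le_one₀ hb.1 hb.2
  have hsq : a ^ 2 < b ^ 2 := pow_lt_pow_left₀ hab ha.1 two_ne_zero
  exact sqrt_lt_sqrt (by linarith) (by linarith)

theorem sqrt_one_sub_sq_lt_one {t : ℝ} (ht : t ≠ 0) : √(1 - t ^ 2) < 1 := by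
  rw [sqrt_lt' one_pos]
  have : 0 < t ^ 2 := by positivity
  linarith

theorem sqrt_one_sub_sq_pos {t : ℝ} (ht : |t| < 1) : 0 < √(1 - t ^ 2) :=
  sqrt_pos.2 (sub_pos.2 ((sq_lt_one_iff_abs_lt_one t).2 ht))

theorem tendsto_sqrt_one_sub_sq_nhdsNE_zero :
    Tendsto (fun t : ℝ ↦ √(1 - t ^ 2)) (𝓝[≠] 0) (𝓝[<] 1) := by
  refine tendsto_nhdsWithin_iff.2 ⟨?_, ?_⟩
  · have hcont : ContinuousAt (fun t : ℝ ↦ √(1 - t ^ 2)) 0 := by fun_prop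
    simpa using hcont.tendsto.mono_left nhdsWithin_le_nhds
  · filter_upwards [self_mem_nhdsWithin] with t ht using sqrt_one_sub_sq_lt_one ht

theorem tendsto_sqrt_one_sub_sq_nhdsLT_one :
    Tendsto (fun t : ℝ ↦ √(1 - t ^ 2)) (𝓝[<] 1) (𝓝[>] 0) := by
  refine tendsto_nhdsWithin_iff.2 ⟨?_, ?_⟩
  · have hcont : ContinuousAt (fun t : ℝ ↦ √(1 - t ^ 2)) 1 := by fun_prop
    simpa using hcont.tendsto.mono_left nhdsWithin_le_nhds
  · filter_upwards [Ioo_mem_nhdsLT one_pos] with t ht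
    exact sqrt_one_sub_sq_pos (abs_lt.2 ⟨neg_one_lt_zero.trans ht.1, ht.2⟩)

theorem sqrt_one_sub_sq_pow_three {t : ℝ} (ht : t ≤ 1) :
    √(1 - t ^ 2) ^ 3 = (1 - t) ^ (3 / 2 : ℝ) * √(1 + t) ^ 3 := by
  have hnonneg : 0 ≤ 1 - t := sub_nonneg.2 ht
  have hpow : (1 - t) ^ (3 / 2 : ℝ) = √(1 - t) ^ 3 := by
    rw [sqrt_eq_rpow, ← rpow_mul_natCast hnonneg]
    norm_num
  rw [hpow, ← mul_pow, ← sqrt_mul hnonneg]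
  ring_nf

theorem tendsto_sqrt_one_sub_sq_pow_three_div_rpow :
    Tendsto (fun t : ℝ ↦ √(1 - t ^ 2) ^ 3 / (1 - t) ^ (3 / 2 : ℝ)) (𝓝[<] 1) (𝓝 (√2 ^ 3)) := by
  have hlim : Tendsto (fun t : ℝ ↦ √(1 + t) ^ 3) (𝓝[<] 1) (𝓝 (√2 ^ 3)) := by
    have hcont : ContinuousAt (fun t : ℝ ↦ √(1 + t) ^ 3) 1 := by fun_prop
    simpa only [one_add_one_eq_two] using hcont.tendsto.mono_left nhdsWithin_le_nhds
  refine hlim.congr' ?_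
  filter_upwards [self_mem_nhdsWithin] with t ht
  have hne : (1 - t) ^ (3 / 2 : ℝ) ≠ 0 := (rpow_pos_of_pos (sub_pos.2 ht) _).ne'
  rw [sqrt_one_sub_sq_pow_three (le_of_lt ht), mul_div_cancel_left₀ _ hne]

/-- The width at time `t` of the analyticity strip of the solution of the inviscid Burgers
equation with initial data `sin x`, for `0 < t ≤ 1`. Other values of `t` carry no meaning. -/
noncomputable def burgersStripWidth (t : ℝ) : ℝ :=
  log ((√(1 - t ^ 2) + 1) / t) - √(1 - t ^ 2)

theorem burgersStripWidth_eq_artanh_sub {t : ℝ} (ht : t ∈ Ioc 0 1) :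
    burgersStripWidth t = artanh √(1 - t ^ 2) - √(1 - t ^ 2) := by
  have hs_sq : √(1 - t ^ 2) ^ 2 = 1 - t ^ 2 := sq_sqrt (by nlinarith [ht.1, ht.2])
  have hs_lt : √(1 - t ^ 2) < 1 := sqrt_one_sub_sq_lt_one ht.1.ne'
  have hs_nonneg : 0 ≤ √(1 - t ^ 2) := sqrt_nonneg _
  rw [burgersStripWidth, artanh]
  generalize √(1 - t ^ 2) = s at hs_sq hs_lt hs_nonneg ⊢
  have ht_sq : t ^ 2 = (1 + s) * (1 - s) := by linear_combination hs_sq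
  have hs_ne : 1 - s ≠ 0 := (sub_pos.2 hs_lt).ne'
  have hsq : (1 + s) / (1 - s) = ((s + 1) / t) ^ 2 := by
    rw [div_pow, ht_sq]
    field
  rw [hsq, sqrt_sq (div_nonneg (by linarith) ht.1.le)]

theorem strictAntiOn_burgersStripWidth : StrictAntiOn burgersStripWidth (Ioc 0 1) := by
  have hmaps : MapsTo (fun t : ℝ ↦ √(1 - t ^ 2)) (Ioc 0 1) (Ioo (-1) 1) := fun t ht ↦
    ⟨neg_one_lt_zero.trans_le (sqrt_nonneg _), sqrt_one_sub_sq_lt_one ht.1.ne'⟩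
  exact (strictMonoOn_artanh_sub_self.comp_strictAntiOn
    (strictAntiOn_sqrt_one_sub_sq.mono Ioc_subset_Icc_self) hmaps).congr
    fun t ht ↦ (burgersStripWidth_eq_artanh_sub ht).symm

theorem tendsto_burgersStripWidth_nhdsGT_zero : Tendsto burgersStripWidth (𝓝[>] 0) atTop := by
  refine (tendsto_artanh_sub_self_nhdsLT_one.comp
    (tendsto_sqrt_one_sub_sq_nhdsNE_zero.mono_left (nhdsGT_le_nhdsNE 0))).congr' ?_
  filter_upwards [Ioc_mem_nhdsGT one_pos] with t ht
  exact (burgersStripWidth_eq_artanh_sub ht).symm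

theorem burgersStripWidth_one : burgersStripWidth 1 = 0 := by
  simp [burgersStripWidth]

theorem tendsto_burgersStripWidth_div_rpow :
    Tendsto (fun t ↦ burgersStripWidth t / (1 - t) ^ (3 / 2 : ℝ)) (𝓝[<] 1) (𝓝 (2 * √2 / 3)) := by
  have hlim := (tendsto_artanh_sub_self_div_cube.comp (tendsto_sqrt_one_sub_sq_nhdsLT_one.mono_right
    (nhdsGT_le_nhdsNE 0))).mul tendsto_sqrt_one_sub_sq_pow_three_div_rpow
  have hconst : 1 / 3 * √2 ^ 3 = 2 * √2 / 3 := by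
    rw [pow_succ, sq_sqrt zero_le_two]
    ring
  rw [hconst] at hlim
  refine hlim.congr' ?_
  filter_upwards [Ioo_mem_nhdsLT one_pos] with t ht
  have hs : √(1 - t ^ 2) ≠ 0 :=
    (sqrt_one_sub_sq_pos (abs_lt.2 ⟨neg_one_lt_zero.trans ht.1, ht.2⟩)).ne'
  rw [burgersStripWidth_eq_artanh_sub (Ioo_subset_Ioc_self ht), Function.comp_apply,
    div_mul_div_cancel₀ (pow_ne_zero 3 hs)]

/-- Properties of the analyticity-strip width of the 1D Burgers solution with initial
data `sin x`: strictly decreasing on `(0,1)`, tends to `∞` at `0⁺`, vanishes at `1`, and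
behaves like `(2√2/3)(1-t)^{3/2}` as `t → 1⁻`. -/
theorem stmt19 (δ₁ : ℝ → ℝ)
    (hδ₁ : ∀ t : ℝ, δ₁ t =
      Real.log ((Real.sqrt (1 - t^2) + 1) / t) - Real.sqrt (1 - t^2)) :
    StrictAntiOn δ₁ (Set.Ioo 0 1) ∧
    Filter.Tendsto δ₁ (nhdsWithin 0 (Set.Ioi 0)) atTop ∧
    δ₁ 1 = 0 ∧
    Filter.Tendsto (fun t => δ₁ t / (1 - t) ^ ((3:ℝ)/2))
      (nhdsWithin 1 (Set.Iio 1)) (nhds (2 * Real.sqrt 2 / 3)) := by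
  obtain rfl : δ₁ = burgersStripWidth := funext hδ₁
  exact ⟨strictAntiOn_burgersStripWidth.mono Ioo_subset_Ioc_self,
    tendsto_burgersStripWidth_nhdsGT_zero, burgersStripWidth_one,
    tendsto_burgersStripWidth_div_rpow⟩
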